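/- There exists a constant C > 0 such that the following holds for every integer n ≥ 2 and every integer b ≥ 1 with m = b². Let x_1,…,x_n and y_1,…,y_n be 2n mutually independent uniformly distributed random points in the unit square [0,1]² ⊂ ℝ², partition [0,1]² into m congruent squares q_1,…,q_m of side 1/b (taken half-open so each point lies in exactly one square), and for each square q_i let A_i := { j : x_j ∈ q_i } and B_i := { j : y_j ∈ q_i }. Let L_i be the minimum of Σ ‖x_j − y_{φ(j)}‖₂ over all partial matchings φ of size min(|A_i|, |B_i|) between A_i and B_i (i.e., injections from the smaller of the two sets into the other, summing the distances of matched pairs), and let L := Σ_{i=1}^m L_i. Then E[L] ≤ C·sqrt( n·log n ). -/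

import Mathlib

open MeasureTheory

/-- The closed unit square `[0,1]² ⊂ ℝ²` (with the Euclidean norm). -/
def unitSquare : Set (EuclideanSpace ℝ (Fin 2)) :=
  {p | ∀ i, p i ∈ Set.Icc (0 : ℝ) 1}

/-- The uniform probability measure on the unit square. -/
noncomputable def unifSquare : Measure (EuclideanSpace ℝ (Fin 2)) :=
  volume.restrict unitSquare

/-- The `m = b²` half-open congruent squares of side `1/b` partitioning the unit square:
`gridSquare b (i, j) = [i/b, (i+1)/b) × [j/b, (j+1)/b)` (so every point lies in at most one
square, and almost every point of the unit square lies in exactly one). -/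
def gridSquare (b : ℕ) (ij : Fin b × Fin b) : Set (EuclideanSpace ℝ (Fin 2)) :=
  {p | p 0 ∈ Set.Ico ((ij.1 : ℝ) / b) (((ij.1 : ℝ) + 1) / b) ∧
       p 1 ∈ Set.Ico ((ij.2 : ℝ) / b) (((ij.2 : ℝ) + 1) / b)}

/-- `M` is a maximal local matching between the index sets `A` (robots) and `B` (targets):
a set of robot–target index pairs with all robot indices in `A` and all target indices in `B`,
no robot index and no target index repeated, of the maximum possible size
`min (#A) (#B)`. -/
def IsMaxLocalMatching {n : ℕ} (A B : Set (Fin n)) (M : Finset (Fin n × Fin n)) : Prop :=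
  (∀ p ∈ M, p.1 ∈ A ∧ p.2 ∈ B) ∧
  (∀ p ∈ M, ∀ q ∈ M, p.1 = q.1 → p = q) ∧
  (∀ p ∈ M, ∀ q ∈ M, p.2 = q.2 → p = q) ∧
  M.card = min (Nat.card A) (Nat.card B)

/-- The minimum total Euclidean distance `L_i` of a maximal local matching between the robots
with index in `A` (at positions `x`) and the targets with index in `B` (at positions `y`). -/
noncomputable def minLocalCost {n : ℕ} (x y : Fin n → EuclideanSpace ℝ (Fin 2))
    (A B : Set (Fin n)) : ℝ :=
  sInf {v : ℝ | ∃ M : Finset (Fin n × Fin n),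
    IsMaxLocalMatching A B M ∧ v = ∑ p ∈ M, ‖x p.1 - y p.2‖}

/-!
Inside one square the two point sets are compared at the resolution of a `2 ^ K × 2 ^ K` grid of
cells. By linear programming duality, the optimal assignment of the cells in the `ℓ¹` distance is
realised by a 1-Lipschitz potential `f`, so its cost is `∑ f(x_i) - ∑ f(y_j)`.

The difference between a point mass and the uniform mass of the square is the divergence of a flow
built scale by scale: at each dyadic scale the mass of a block is spread evenly over its parent.
Summing by parts turns the cost into a sum, over the edges `R` of the grid, of the absolute values
of the total flow of the sampled points through `R`. Since this flow has mean zero and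
square sum `O(K)` over the position of a sample, `m` independent samples give an expected
`O(√(m K) / 2 ^ K)` for each edge, hence a cost `O(2 ^ K √(m K))` for the whole grid.

Conditionally on the squares they belong to, the points are uniform inside their squares.
Cauchy–Schwarz over the squares bounds the total expected cost by `O(√(n K))`, and `K = ⌈log₂ n⌉`
makes the error of rounding the points to cells `O(1)`.
-/

/-! ### Optimal assignments and Kantorovich potentials -/

section Duality

variable {ι κ : Type*} [Fintype ι] [Fintype κ]

/-- A feasible pair of prices of the assignment problem with cost matrix `c`. -/
def IsDualFeasible (c : ι → κ → ℤ) (u : ι → ℤ) (v : κ → ℤ) : Prop :=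
  ∀ i j, u i + v j ≤ c i j

theorem exists_isDualFeasible_maximal (e : ι ≃ κ) (c : ι → κ → ℤ) :
    ∃ u v, IsDualFeasible c u v ∧
      ∀ u' v', IsDualFeasible c u' v' → ∑ i, u' i + ∑ j, v' j ≤ ∑ i, u i + ∑ j, v j := by
  obtain ⟨_, ⟨u, v, huv, rfl⟩, hmax⟩ := Int.exists_greatest_of_bdd
    (P := fun s ↦ ∃ u v, IsDualFeasible c u v ∧ ∑ i, u i + ∑ j, v j = s)
    ⟨∑ i, c i (e i), by
      rintro _ ⟨u, v, huv, rfl⟩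
      rw [← Equiv.sum_comp e v, ← Finset.sum_add_distrib]
      exact Finset.sum_le_sum fun i _ ↦ huv i (e i)⟩
    ⟨_, fun i ↦ -∑ j, |c i j|, 0, fun i j ↦ by
      have := Finset.single_le_sum (fun j _ ↦ abs_nonneg (c i j)) (Finset.mem_univ j)
      have := neg_abs_le (c i j)
      simp only [Pi.zero_apply]
      lia, rfl⟩
  exact ⟨u, v, huv, fun u' v' h ↦ hmax _ ⟨u', v', h, rfl⟩⟩

open Classical in
-- Raising the prices on a set `s` violating Hall's condition and lowering them on its
-- neighbourhood in the graph of tight pairs keeps feasibility and increases the dual value.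
theorem IsDualFeasible.card_le_card_biUnion_tight {c : ι → κ → ℤ} {u : ι → ℤ} {v : κ → ℤ}
    (huv : IsDualFeasible c u v)
    (hmax : ∀ u' v', IsDualFeasible c u' v' →
      ∑ i, u' i + ∑ j, v' j ≤ ∑ i, u i + ∑ j, v j) (s : Finset ι) :
    s.card ≤ (s.biUnion fun i ↦ {j | u i + v j = c i j}).card := by
  set t := s.biUnion fun i ↦ {j | u i + v j = c i j}
  have hfeasible : IsDualFeasible c (fun i ↦ u i + if i ∈ s then 1 else 0)
      (fun j ↦ v j - if j ∈ t then 1 else 0) := by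
    intro i j
    have hij := huv i j
    by_cases hi : i ∈ s <;> by_cases hj : j ∈ t <;> simp only [hi, hj, if_true, if_false]
    · lia
    · have : u i + v j ≠ c i j := fun h ↦
        hj (Finset.mem_biUnion.2 ⟨i, hi, Finset.mem_filter.2 ⟨Finset.mem_univ j, h⟩⟩)
      lia
    · lia
    · lia
  have hvalue := hmax _ _ hfeasible
  simp only [Finset.sum_add_distrib, Finset.sum_sub_distrib, Finset.sum_ite_mem,
    Finset.univ_inter, Finset.sum_const, nsmul_eq_mul, mul_one] at hvalue
  lia

theorem exists_equiv_isDualFeasible_tight (h : Fintype.card ι = Fintype.card κ)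
    (c : ι → κ → ℤ) :
    ∃ (σ : ι ≃ κ) (u : ι → ℤ) (v : κ → ℤ),
      IsDualFeasible c u v ∧ ∀ i, u i + v (σ i) = c i (σ i) := by
  classical
  obtain ⟨u, v, huv, hmax⟩ := exists_isDualFeasible_maximal (Fintype.equivOfCardEq h) c
  obtain ⟨φ, hinj, htight⟩ := (Finset.all_card_le_biUnion_card_iff_exists_injective _).1
    (fun s ↦ by convert huv.card_le_card_biUnion_tight hmax s)
  refine ⟨.ofBijective φ ((Fintype.bijective_iff_injective_and_card φ).2 ⟨hinj, h⟩), u, v, huv,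
    fun i ↦ ?_⟩
  exact (Finset.mem_filter.1 (htight i)).2

theorem exists_equiv_exists_potential [Nonempty κ] {X : Type*} {d : X → X → ℤ}
    (hself : ∀ z, d z z = 0) (htriangle : ∀ z w t, d z t ≤ d z w + d w t)
    (h : Fintype.card ι = Fintype.card κ) (x : ι → X) (y : κ → X) :
    ∃ (σ : ι ≃ κ) (f : X → ℤ), (∀ z w, f z - f w ≤ d z w) ∧
      ∀ i, d (x i) (y (σ i)) = f (x i) - f (y (σ i)) := by
  obtain ⟨σ, u, v, huv, htight⟩ :=
    exists_equiv_isDualFeasible_tight h fun i j ↦ d (x i) (y j)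
  -- the `c`-transform of `-v`
  let f : X → ℤ := fun z ↦ Finset.univ.inf' Finset.univ_nonempty fun j ↦ d z (y j) - v j
  have hf_le (z : X) (j : κ) : f z ≤ d z (y j) - v j := Finset.inf'_le _ (Finset.mem_univ j)
  have hlipschitz (z w : X) : f z - f w ≤ d z w := by
    obtain ⟨j, -, hj⟩ :=
      Finset.exists_mem_eq_inf' Finset.univ_nonempty fun j ↦ d w (y j) - v j
    have hw : f w = d w (y j) - v j := hj
    linarith [hw, hf_le z j, htriangle z w (y j)]
  refine ⟨σ, f, hlipschitz, fun i ↦ le_antisymm ?_ (hlipschitz _ _)⟩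
  have hx : u i ≤ f (x i) := Finset.le_inf' _ _ fun j _ ↦ by linarith [huv i j]
  linarith [hf_le (y (σ i)) (σ i), hself (y (σ i)), htight i]

end Duality

/-- The taxicab distance on `ℕ × ℕ`. -/
def gridDist (z w : ℕ × ℕ) : ℤ :=
  |(z.1 : ℤ) - w.1| + |(z.2 : ℤ) - w.2|

/-- The optimal assignment cost of two families of grid points in the taxicab distance
(and `0` if there is no bijection between the index types). -/
noncomputable def gridCost {ι κ : Type*} [Fintype ι] (x : ι → ℕ × ℕ) (y : κ → ℕ × ℕ) : ℝ :=
  ⨅ σ : ι ≃ κ, ∑ i, (gridDist (x i) (y (σ i)) : ℝ)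

theorem gridDist_self (z : ℕ × ℕ) : gridDist z z = 0 := by
  simp [gridDist]

theorem gridDist_triangle (z w t : ℕ × ℕ) : gridDist z t ≤ gridDist z w + gridDist w t := by
  have h₁ := abs_sub_le (z.1 : ℤ) w.1 t.1
  have h₂ := abs_sub_le (z.2 : ℤ) w.2 t.2
  simp only [gridDist]
  linarith

section GridCost

variable {ι κ : Type*} [Fintype ι]

theorem gridCost_le (x : ι → ℕ × ℕ) (y : κ → ℕ × ℕ) (σ : ι ≃ κ) :
    gridCost x y ≤ ∑ i, (gridDist (x i) (y (σ i)) : ℝ) :=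
  ciInf_le ⟨0, Set.forall_mem_range.2 fun _ ↦ Finset.sum_nonneg fun _ _ ↦ by
    simp only [gridDist]; positivity⟩ σ

theorem exists_potential_gridCost_le [Fintype κ] (h : Fintype.card ι = Fintype.card κ)
    (x : ι → ℕ × ℕ) (y : κ → ℕ × ℕ) :
    ∃ f : ℕ × ℕ → ℤ, (∀ z w, |f z - f w| ≤ gridDist z w) ∧
      gridCost x y ≤ ∑ i, (f (x i) : ℝ) - ∑ j, (f (y j) : ℝ) := by
  rcases isEmpty_or_nonempty κ with hκ | hκ
  · have hι : IsEmpty ι := Fintype.card_eq_zero_iff.1 (h.trans Fintype.card_eq_zero)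
    refine ⟨0, fun z w ↦ ?_, ?_⟩
    · simp only [gridDist, Pi.zero_apply, sub_self, abs_zero]
      positivity
    · simpa using gridCost_le x y (Equiv.equivOfIsEmpty ι κ)
  obtain ⟨σ, f, hf, hσ⟩ := exists_equiv_exists_potential gridDist_self gridDist_triangle h x y
  refine ⟨f, fun z w ↦ abs_sub_le_iff.2 ⟨hf z w, ?_⟩, ?_⟩
  · simpa only [gridDist, abs_sub_comm] using hf w z
  · calc gridCost x y ≤ ∑ i, (gridDist (x i) (y (σ i)) : ℝ) := gridCost_le x y σ
      _ = ∑ i, (f (x i) : ℝ) - ∑ j, (f (y j) : ℝ) := by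
        rw [← Equiv.sum_comp σ, ← Finset.sum_sub_distrib]
        exact Finset.sum_congr rfl fun i _ ↦ by exact_mod_cast hσ i

end GridCost

/-! ### Multiscale flows -/

/-- The density of the uniform distribution on the dyadic interval of length `2 ^ k`
containing `z`, as a function of `t`. -/
noncomputable def dyadicKernel (k z t : ℕ) : ℝ :=
  if t / 2 ^ k = z / 2 ^ k then (1 / 2) ^ k else 0

/-- The mass that `dyadicKernel k z` gives to `{0, …, m - 1}`. -/
noncomputable def dyadicCDF (k z m : ℕ) : ℝ :=
  ∑ t ∈ Finset.range m, dyadicKernel k z t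

/-- The flow on the path `ℕ` transporting the uniform distribution on the dyadic interval of
length `2 ^ (k + 1)` around `z` to the uniform distribution on its half containing `z`; the value
at `t` is the mass moved from `{0, …, t}` to the right. -/
noncomputable def dyadicFlow (k z t : ℕ) : ℝ :=
  dyadicCDF (k + 1) z (t + 1) - dyadicCDF k z (t + 1)

section OneDimensional

theorem dyadicKernel_nonneg (k z t : ℕ) : 0 ≤ dyadicKernel k z t := by
  unfold dyadicKernel
  split_ifs <;> positivity

theorem dyadicKernel_le (k z t : ℕ) : dyadicKernel k z t ≤ (1 / 2) ^ k := by
  unfold dyadicKernel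
  split_ifs
  · exact le_rfl
  · positivity

theorem dyadicKernel_comm (k z t : ℕ) : dyadicKernel k z t = dyadicKernel k t z := by
  simp only [dyadicKernel, eq_comm]

theorem div_two_pow_eq_iff_mem_Ico (k q t : ℕ) :
    t / 2 ^ k = q ↔ t ∈ Finset.Ico (q * 2 ^ k) ((q + 1) * 2 ^ k) := by
  rw [Finset.mem_Ico, ← Nat.le_div_iff_mul_le (by positivity),
    ← Nat.div_lt_iff_lt_mul (by positivity)]
  lia

theorem div_two_pow_eq_mono {k l : ℕ} (hkl : k ≤ l) {z t : ℕ} (h : t / 2 ^ k = z / 2 ^ k) :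
    t / 2 ^ l = z / 2 ^ l := by
  rw [← Nat.add_sub_cancel' hkl, pow_add, ← Nat.div_div_eq_div_mul, h, Nat.div_div_eq_div_mul]

theorem dyadicCDF_mono (k z : ℕ) : Monotone (dyadicCDF k z) := fun _ _ h ↦
  Finset.sum_le_sum_of_subset_of_nonneg (Finset.range_subset_range.2 h)
    fun _ _ _ ↦ dyadicKernel_nonneg _ _ _

theorem dyadicCDF_nonneg (k z m : ℕ) : 0 ≤ dyadicCDF k z m :=
  Finset.sum_nonneg fun _ _ ↦ dyadicKernel_nonneg _ _ _

theorem dyadicCDF_eq_one {k z m : ℕ} (hm : (z / 2 ^ k + 1) * 2 ^ k ≤ m) :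
    dyadicCDF k z m = 1 := by
  have hblock : (Finset.range m).filter (fun t ↦ t / 2 ^ k = z / 2 ^ k) =
      Finset.Ico (z / 2 ^ k * 2 ^ k) ((z / 2 ^ k + 1) * 2 ^ k) := by
    ext t
    simp only [div_two_pow_eq_iff_mem_Ico, Finset.mem_filter, Finset.mem_range, Finset.mem_Ico]
    lia
  simp only [dyadicCDF, dyadicKernel]
  rw [← Finset.sum_filter, hblock, Finset.sum_const, Nat.card_Ico, ← Nat.sub_mul]
  simp

theorem dyadicCDF_le_one (k z m : ℕ) : dyadicCDF k z m ≤ 1 :=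
  (dyadicCDF_mono k z (le_max_left m _)).trans_eq (dyadicCDF_eq_one (le_max_right m _))

theorem dyadicCDF_eq_zero {k z m : ℕ} (hm : m ≤ z / 2 ^ k * 2 ^ k) : dyadicCDF k z m = 0 :=
  Finset.sum_eq_zero fun t ht ↦ if_neg fun h ↦ by
    have := Finset.mem_range.1 ht
    have := Finset.mem_Ico.1 ((div_two_pow_eq_iff_mem_Ico k _ t).1 h)
    lia

theorem dyadicCDF_two_pow {K k z : ℕ} (hk : k ≤ K) (hz : z < 2 ^ K) :
    dyadicCDF k z (2 ^ K) = 1 := by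
  obtain ⟨l, rfl⟩ := Nat.exists_eq_add_of_le hk
  rw [pow_add, mul_comm] at hz
  refine dyadicCDF_eq_one ?_
  rw [pow_add, mul_comm (2 ^ k)]
  exact Nat.mul_le_mul_right _ ((Nat.div_lt_iff_lt_mul (by positivity)).2 hz)

theorem abs_dyadicFlow_le_one (k z t : ℕ) : |dyadicFlow k z t| ≤ 1 :=
  abs_sub_le_of_nonneg_of_le (dyadicCDF_nonneg _ _ _) (dyadicCDF_le_one _ _ _)
    (dyadicCDF_nonneg _ _ _) (dyadicCDF_le_one _ _ _)

theorem dyadicFlow_eq_zero {k z t : ℕ} (h : t / 2 ^ (k + 1) ≠ z / 2 ^ (k + 1)) :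
    dyadicFlow k z t = 0 := by
  have hz : z / 2 ^ (k + 1) = z / 2 ^ k / 2 := by rw [pow_succ, Nat.div_div_eq_div_mul]
  have hleft : z / 2 ^ (k + 1) * 2 ^ (k + 1) ≤ z / 2 ^ k * 2 ^ k := by
    rw [hz, pow_succ', ← mul_assoc]
    exact Nat.mul_le_mul_right _ (Nat.div_mul_le_self _ _)
  have hright : (z / 2 ^ k + 1) * 2 ^ k ≤ (z / 2 ^ (k + 1) + 1) * 2 ^ (k + 1) := by
    rw [hz, pow_succ', ← mul_assoc]
    exact Nat.mul_le_mul_right _ (by lia)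
  rcases lt_or_gt_of_ne h with h | h
  · have ht : t + 1 ≤ z / 2 ^ (k + 1) * 2 ^ (k + 1) := (Nat.div_lt_iff_lt_mul (by positivity)).1 h
    rw [dyadicFlow, dyadicCDF_eq_zero ht, dyadicCDF_eq_zero (ht.trans hleft), sub_zero]
  · have ht : (z / 2 ^ (k + 1) + 1) * 2 ^ (k + 1) ≤ t + 1 :=
      ((Nat.le_div_iff_mul_le (by positivity)).1 h).trans t.le_succ
    rw [dyadicFlow, dyadicCDF_eq_one ht, dyadicCDF_eq_one (hright.trans ht), sub_self]

theorem sum_dyadicCDF {K k m : ℕ} (hk : k ≤ K) (hm : m ≤ 2 ^ K) :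
    ∑ z ∈ Finset.range (2 ^ K), dyadicCDF k z m = m := by
  have hcolumn (s : ℕ) (hs : s ∈ Finset.range m) :
      ∑ z ∈ Finset.range (2 ^ K), dyadicKernel k z s = 1 := by
    simp only [dyadicKernel_comm k _ s]
    exact dyadicCDF_two_pow hk ((Finset.mem_range.1 hs).trans_le hm)
  simp only [dyadicCDF]
  rw [Finset.sum_comm, Finset.sum_congr rfl hcolumn]
  simp

theorem sum_dyadicFlow {K k t : ℕ} (hk : k < K) (ht : t < 2 ^ K) :
    ∑ z ∈ Finset.range (2 ^ K), dyadicFlow k z t = 0 := by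
  simp only [dyadicFlow]
  rw [Finset.sum_sub_distrib, sum_dyadicCDF hk ht, sum_dyadicCDF hk.le ht, sub_self]

theorem sum_range_mul_eq_neg_of_sum_eq_zero {R : Type*} [CommRing R] {e : ℕ → R} {N : ℕ}
    (he : ∑ t ∈ Finset.range N, e t = 0) (g : ℕ → R) :
    ∑ t ∈ Finset.range N, e t * g t =
      -∑ t ∈ Finset.range N, (∑ s ∈ Finset.range (t + 1), e s) * (g (t + 1) - g t) := by
  cases N with
  | zero => simp
  | succ N =>
    have hparts := Finset.sum_range_by_parts g e (N + 1)
    simp only [smul_eq_mul, he, mul_zero, zero_sub, add_tsub_cancel_right] at hparts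
    rw [Finset.sum_range_succ fun t ↦ (∑ s ∈ Finset.range (t + 1), e s) * (g (t + 1) - g t), he,
      zero_mul, add_zero]
    simpa only [mul_comm] using hparts

/-- The average of `g` over the dyadic interval of length `2 ^ k` containing `z`, for
`k ≤ K` and `z < 2 ^ K`. -/
noncomputable def dyadicAvg (K k : ℕ) (g : ℕ → ℝ) (z : ℕ) : ℝ :=
  ∑ t ∈ Finset.range (2 ^ K), dyadicKernel k z t * g t

theorem dyadicAvg_zero {K z : ℕ} (hz : z < 2 ^ K) (g : ℕ → ℝ) : dyadicAvg K 0 g z = g z := by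
  simp [dyadicAvg, dyadicKernel, hz]

theorem dyadicAvg_sub (K k : ℕ) (g h : ℕ → ℝ) (z : ℕ) :
    dyadicAvg K k g z - dyadicAvg K k h z = dyadicAvg K k (fun t ↦ g t - h t) z := by
  simp only [dyadicAvg, mul_sub, Finset.sum_sub_distrib]

theorem dyadicAvg_self {K z w : ℕ} (hz : z < 2 ^ K) (hw : w < 2 ^ K) (g : ℕ → ℝ) :
    dyadicAvg K K g z = dyadicAvg K K g w := by
  simp only [dyadicAvg, dyadicKernel, Nat.div_eq_of_lt hz, Nat.div_eq_of_lt hw]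

theorem dyadicAvg_sub_dyadicAvg_succ {K k z : ℕ} (hk : k < K) (hz : z < 2 ^ K) (g : ℕ → ℝ) :
    dyadicAvg K k g z - dyadicAvg K (k + 1) g z =
      ∑ t ∈ Finset.range (2 ^ K), dyadicFlow k z t * (g (t + 1) - g t) := by
  have hmass : ∑ t ∈ Finset.range (2 ^ K), (dyadicKernel k z t - dyadicKernel (k + 1) z t) = 0 := by
    rw [Finset.sum_sub_distrib, sub_eq_zero]
    exact (dyadicCDF_two_pow hk.le hz).trans (dyadicCDF_two_pow hk hz).symm
  simp only [dyadicAvg]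
  rw [← Finset.sum_sub_distrib, ← Finset.sum_congr rfl fun t _ ↦ sub_mul _ _ (g t),
    sum_range_mul_eq_neg_of_sum_eq_zero hmass, ← Finset.sum_neg_distrib]
  refine Finset.sum_congr rfl fun t _ ↦ ?_
  rw [Finset.sum_sub_distrib, ← neg_mul, neg_sub]
  rfl

end OneDimensional

/-- The index set `{0, …, 2 ^ K - 1} × {0, …, 2 ^ K - 1}`. -/
def dyadicGrid (K : ℕ) : Finset (ℕ × ℕ) :=
  Finset.range (2 ^ K) ×ˢ Finset.range (2 ^ K)

/-- The multiscale kernel `z ↦ ψ(R, z)`: its value is the amount of horizontal flow through the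
edge from `R` to `R + (1, 0)` when the uniform distribution on `dyadicGrid K` is concentrated onto
`z` through the dyadic squares around `z`. The averaging in the vertical direction is at scale
`k + l`; the horizontal edges use `l = 0` and, with the coordinates swapped, the vertical edges
use `l = 1`. -/
noncomputable def multiscaleFlow (l K : ℕ) (R z : ℕ × ℕ) : ℝ :=
  ∑ k ∈ Finset.range K, dyadicFlow k z.1 R.1 * dyadicKernel (k + l) z.2 R.2

section Decomposition

variable {K : ℕ}

theorem mem_dyadicGrid {z : ℕ × ℕ} : z ∈ dyadicGrid K ↔ z.1 < 2 ^ K ∧ z.2 < 2 ^ K := by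
  simp [dyadicGrid]

theorem swap_mem_dyadicGrid {z : ℕ × ℕ} (hz : z ∈ dyadicGrid K) : z.swap ∈ dyadicGrid K :=
  mem_dyadicGrid.2 (mem_dyadicGrid.1 hz).symm

/-- The average of `f` over the dyadic square of side `2 ^ k` containing `z`. -/
noncomputable def dyadicSquareAvg (K k : ℕ) (f : ℕ × ℕ → ℝ) (z : ℕ × ℕ) : ℝ :=
  dyadicAvg K k (fun s ↦ dyadicAvg K k (fun t ↦ f (s, t)) z.2) z.1

theorem dyadicSquareAvg_zero {z : ℕ × ℕ} (hz : z ∈ dyadicGrid K) (f : ℕ × ℕ → ℝ) :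
    dyadicSquareAvg K 0 f z = f z := by
  simp only [dyadicSquareAvg, dyadicAvg_zero (mem_dyadicGrid.1 hz).1,
    dyadicAvg_zero (mem_dyadicGrid.1 hz).2]

theorem dyadicSquareAvg_self {z w : ℕ × ℕ} (hz : z ∈ dyadicGrid K) (hw : w ∈ dyadicGrid K)
    (f : ℕ × ℕ → ℝ) : dyadicSquareAvg K K f z = dyadicSquareAvg K K f w := by
  simp only [dyadicSquareAvg, dyadicAvg_self (mem_dyadicGrid.1 hz).2 (mem_dyadicGrid.1 hw).2]
  exact dyadicAvg_self (mem_dyadicGrid.1 hz).1 (mem_dyadicGrid.1 hw).1 _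

-- First the horizontal scale is changed from `k` to `k + 1`, then the vertical one.
theorem dyadicSquareAvg_sub_dyadicSquareAvg_succ {k : ℕ} (hk : k < K) {z : ℕ × ℕ}
    (hz : z ∈ dyadicGrid K) (f : ℕ × ℕ → ℝ) :
    dyadicSquareAvg K k f z - dyadicSquareAvg K (k + 1) f z =
      ∑ R ∈ dyadicGrid K,
        (dyadicFlow k z.1 R.1 * dyadicKernel k z.2 R.2 * (f (R.1 + 1, R.2) - f R) +
          dyadicFlow k z.2 R.2 * dyadicKernel (k + 1) z.1 R.1 * (f (R.1, R.2 + 1) - f R)) := by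
  obtain ⟨hz₁, hz₂⟩ := mem_dyadicGrid.1 hz
  have hhorizontal := dyadicAvg_sub_dyadicAvg_succ hk hz₁
    fun s ↦ dyadicAvg K k (fun t ↦ f (s, t)) z.2
  have hvertical (s : ℕ) := dyadicAvg_sub_dyadicAvg_succ hk hz₂ fun t ↦ f (s, t)
  rw [dyadicSquareAvg, dyadicSquareAvg, ← sub_add_sub_cancel, hhorizontal]
  simp only [dyadicGrid, Finset.sum_add_distrib, Finset.sum_product]
  congr 1
  · simp only [dyadicAvg_sub]
    simp only [dyadicAvg, Finset.mul_sum, mul_assoc]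
  · simp only [dyadicAvg_sub, hvertical]
    simp only [dyadicAvg, Finset.mul_sum]
    exact Finset.sum_congr rfl fun s _ ↦ Finset.sum_congr rfl fun t _ ↦ by ring

theorem eq_dyadicSquareAvg_add_sum_multiscaleFlow {z : ℕ × ℕ} (hz : z ∈ dyadicGrid K)
    (f : ℕ × ℕ → ℝ) :
    f z = dyadicSquareAvg K K f z + ∑ R ∈ dyadicGrid K,
      (multiscaleFlow 0 K R z * (f (R.1 + 1, R.2) - f R) +
        multiscaleFlow 1 K R.swap z.swap * (f (R.1, R.2 + 1) - f R)) := by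
  rw [← sub_eq_iff_eq_add']
  calc f z - dyadicSquareAvg K K f z
      = ∑ k ∈ Finset.range K, (dyadicSquareAvg K k f z - dyadicSquareAvg K (k + 1) f z) := by
        rw [Finset.sum_range_sub' (fun k ↦ dyadicSquareAvg K k f z), dyadicSquareAvg_zero hz]
    _ = _ := by
        rw [Finset.sum_congr rfl fun k hk ↦
          dyadicSquareAvg_sub_dyadicSquareAvg_succ (Finset.mem_range.1 hk) hz f, Finset.sum_comm]
        simp only [Finset.sum_add_distrib, multiscaleFlow, Finset.sum_mul, add_zero,
          Prod.fst_swap, Prod.snd_swap]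

theorem sum_multiscaleFlow (l : ℕ) {R : ℕ × ℕ} (hR : R ∈ dyadicGrid K) :
    ∑ z ∈ dyadicGrid K, multiscaleFlow l K R z = 0 := by
  simp only [multiscaleFlow]
  rw [Finset.sum_comm]
  refine Finset.sum_eq_zero fun k hk ↦ ?_
  rw [dyadicGrid, Finset.sum_product]
  simp only [← Finset.mul_sum, ← Finset.sum_mul]
  rw [sum_dyadicFlow (Finset.mem_range.1 hk) (mem_dyadicGrid.1 hR).1, zero_mul]

end Decomposition

section SecondMoment

theorem sq_sum_pow_le {r : ℝ} (hr₀ : 0 ≤ r) (hr₁ : r < 1) (s : Finset ℕ) :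
    (∑ k ∈ s, r ^ k) ^ 2 ≤ (∑ k ∈ s, (r ^ 2) ^ k) / (1 - r) ^ 2 := by
  rcases s.eq_empty_or_nonempty with rfl | hs
  · simp
  set m := s.min' hs
  have hgeometric : ∑ k ∈ s, r ^ k ≤ r ^ m / (1 - r) := calc
    ∑ k ∈ s, r ^ k ≤ ∑ k ∈ Finset.Ico m (s.max' hs + 1), r ^ k :=
      Finset.sum_le_sum_of_subset_of_nonneg
        (fun k hk ↦ Finset.mem_Ico.2 ⟨s.min'_le k hk, Nat.lt_succ_of_le (s.le_max' k hk)⟩)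
        fun _ _ _ ↦ by positivity
    _ ≤ r ^ m / (1 - r) := geom_sum_Ico_le_of_lt_one hr₀ hr₁
  calc (∑ k ∈ s, r ^ k) ^ 2 ≤ (r ^ m / (1 - r)) ^ 2 :=
        pow_le_pow_left₀ (Finset.sum_nonneg fun _ _ ↦ by positivity) hgeometric 2
    _ = (r ^ 2) ^ m / (1 - r) ^ 2 := by rw [div_pow, ← pow_mul, ← pow_mul, mul_comm]
    _ ≤ (∑ k ∈ s, (r ^ 2) ^ k) / (1 - r) ^ 2 := by
        gcongr
        exact Finset.single_le_sum (f := fun k ↦ (r ^ 2) ^ k) (fun _ _ ↦ by positivity)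
          (s.min'_mem hs)

/-- The index of the dyadic square of side `2 ^ k` containing `z`. -/
def dyadicBlock (k : ℕ) (z : ℕ × ℕ) : ℕ × ℕ :=
  (z.1 / 2 ^ k, z.2 / 2 ^ k)

theorem card_filter_dyadicBlock_eq_le (s : Finset (ℕ × ℕ)) (k : ℕ) (B : ℕ × ℕ) :
    (s.filter fun z ↦ dyadicBlock k z = B).card ≤ 4 ^ k := by
  calc (s.filter fun z ↦ dyadicBlock k z = B).card
      ≤ (Finset.Ico (B.1 * 2 ^ k) ((B.1 + 1) * 2 ^ k) ×ˢ
          Finset.Ico (B.2 * 2 ^ k) ((B.2 + 1) * 2 ^ k)).card := by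
        refine Finset.card_le_card fun z hz ↦ ?_
        obtain ⟨-, rfl⟩ := Finset.mem_filter.1 hz
        exact Finset.mem_product.2 ⟨(div_two_pow_eq_iff_mem_Ico _ _ _).1 rfl,
          (div_two_pow_eq_iff_mem_Ico _ _ _).1 rfl⟩
    _ = 4 ^ k := by
        rw [Finset.card_product, Nat.card_Ico, Nat.card_Ico, ← Nat.sub_mul, ← Nat.sub_mul,
          Nat.add_sub_cancel_left, Nat.add_sub_cancel_left, one_mul, ← mul_pow,
          show 2 * 2 = 4 from rfl]

variable {l : ℕ}

theorem abs_multiscaleFlow_le (hl : l ≤ 1) (K : ℕ) (R z : ℕ × ℕ) :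
    |multiscaleFlow l K R z| ≤
      ∑ k ∈ (Finset.range K).filter fun k ↦ dyadicBlock (k + 1) z = dyadicBlock (k + 1) R,
        (1 / 2 : ℝ) ^ k := by
  rw [Finset.sum_filter]
  refine (Finset.abs_sum_le_sum_abs _ _).trans (Finset.sum_le_sum fun k _ ↦ ?_)
  split_ifs with h
  · rw [abs_mul, abs_of_nonneg (dyadicKernel_nonneg _ _ _)]
    calc |dyadicFlow k z.1 R.1| * dyadicKernel (k + l) z.2 R.2 ≤ 1 * (1 / 2) ^ (k + l) :=
          mul_le_mul (abs_dyadicFlow_le_one _ _ _) (dyadicKernel_le _ _ _)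
            (dyadicKernel_nonneg _ _ _) zero_le_one
      _ ≤ (1 / 2) ^ k := by
          rw [one_mul]
          exact pow_le_pow_of_le_one (by norm_num) (by norm_num) (Nat.le_add_right k l)
  · have hzero : dyadicFlow k z.1 R.1 * dyadicKernel (k + l) z.2 R.2 = 0 := by
      by_contra hne
      refine h (Prod.ext ?_ ?_)
      · by_contra h₁
        exact left_ne_zero_of_mul hne (dyadicFlow_eq_zero (Ne.symm h₁))
      · by_contra h₂
        exact right_ne_zero_of_mul hne
          (if_neg fun h ↦ h₂ (div_two_pow_eq_mono (by lia) h).symm)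
    rw [hzero, abs_zero]

theorem sum_sq_multiscaleFlow_le (hl : l ≤ 1) (K : ℕ) (s : Finset (ℕ × ℕ)) (R : ℕ × ℕ) :
    ∑ z ∈ s, multiscaleFlow l K R z ^ 2 ≤ 16 * K := by
  have hpointwise (z : ℕ × ℕ) : multiscaleFlow l K R z ^ 2 ≤ 4 *
      ∑ k ∈ Finset.range K, if dyadicBlock (k + 1) z = dyadicBlock (k + 1) R
        then (1 / 4 : ℝ) ^ k else 0 := by
    calc multiscaleFlow l K R z ^ 2
        ≤ (∑ k ∈ (Finset.range K).filter fun k ↦ dyadicBlock (k + 1) z = dyadicBlock (k + 1) R,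
            (1 / 2 : ℝ) ^ k) ^ 2 :=
          sq_le_sq.2 ((abs_multiscaleFlow_le hl K R z).trans (le_abs_self _))
      _ ≤ _ := sq_sum_pow_le (by norm_num) (by norm_num) _
      _ = _ := by rw [Finset.sum_filter]; norm_num; ring
  calc ∑ z ∈ s, multiscaleFlow l K R z ^ 2
      ≤ ∑ z ∈ s, 4 * ∑ k ∈ Finset.range K,
          if dyadicBlock (k + 1) z = dyadicBlock (k + 1) R then (1 / 4 : ℝ) ^ k else 0 :=
        Finset.sum_le_sum fun z _ ↦ hpointwise z
    _ = ∑ k ∈ Finset.range K, 4 *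
          ((s.filter fun z ↦ dyadicBlock (k + 1) z = dyadicBlock (k + 1) R).card *
            (1 / 4 : ℝ) ^ k) := by
        rw [← Finset.mul_sum, Finset.sum_comm, Finset.mul_sum]
        simp only [← Finset.sum_filter, Finset.sum_const, nsmul_eq_mul]
    _ ≤ ∑ _k ∈ Finset.range K, 16 := by
        refine Finset.sum_le_sum fun k _ ↦ ?_
        have hcard : ((s.filter fun z ↦ dyadicBlock (k + 1) z = dyadicBlock (k + 1) R).card : ℝ) ≤
            4 ^ (k + 1) := by exact_mod_cast card_filter_dyadicBlock_eq_le s (k + 1) _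
        calc _ ≤ 4 * (4 ^ (k + 1) * (1 / 4 : ℝ) ^ k) := by gcongr
          _ = 16 := by rw [pow_succ', mul_assoc 4, ← mul_pow]; norm_num
    _ = 16 * K := by rw [Finset.sum_const, Finset.card_range, nsmul_eq_mul, mul_comm]

end SecondMoment

section Discrepancy

variable {ι κ : Type*} [Fintype ι] [Fintype κ] {K : ℕ} {x : ι → ℕ × ℕ} {y : κ → ℕ × ℕ}

theorem sum_comp_eq_add_sum_multiscaleFlow (hx : ∀ i, x i ∈ dyadicGrid K) (f : ℕ × ℕ → ℝ) :
    ∑ i, f (x i) = Fintype.card ι * dyadicSquareAvg K K f 0 + ∑ R ∈ dyadicGrid K,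
      ((∑ i, multiscaleFlow 0 K R (x i)) * (f (R.1 + 1, R.2) - f R) +
        (∑ i, multiscaleFlow 1 K R.swap (x i).swap) * (f (R.1, R.2 + 1) - f R)) := by
  have h0 : (0 : ℕ × ℕ) ∈ dyadicGrid K := mem_dyadicGrid.2 ⟨by simp, by simp⟩
  rw [Finset.sum_congr rfl fun i _ ↦ eq_dyadicSquareAvg_add_sum_multiscaleFlow (hx i) f,
    Finset.sum_add_distrib, Finset.sum_congr rfl fun i _ ↦ dyadicSquareAvg_self (hx i) h0 f,
    Finset.sum_comm]
  simp only [Finset.sum_add_distrib, Finset.sum_mul, Finset.sum_const, nsmul_eq_mul,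
    Finset.card_univ]

theorem sum_sub_sum_le_sum_abs_multiscaleFlow (h : Fintype.card ι = Fintype.card κ)
    (hx : ∀ i, x i ∈ dyadicGrid K) (hy : ∀ j, y j ∈ dyadicGrid K) {f : ℕ × ℕ → ℝ}
    (hright : ∀ R : ℕ × ℕ, |f (R.1 + 1, R.2) - f R| ≤ 1)
    (hup : ∀ R : ℕ × ℕ, |f (R.1, R.2 + 1) - f R| ≤ 1) :
    ∑ i, f (x i) - ∑ j, f (y j) ≤ ∑ R ∈ dyadicGrid K,
      (|∑ i, multiscaleFlow 0 K R (x i) - ∑ j, multiscaleFlow 0 K R (y j)| +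
        |∑ i, multiscaleFlow 1 K R.swap (x i).swap -
          ∑ j, multiscaleFlow 1 K R.swap (y j).swap|) := by
  have mul_le_abs {a δ : ℝ} (hδ : |δ| ≤ 1) : a * δ ≤ |a| := calc
    a * δ ≤ |a| * |δ| := (le_abs_self _).trans_eq (abs_mul a δ)
    _ ≤ |a| := mul_le_of_le_one_right (abs_nonneg a) hδ
  rw [sum_comp_eq_add_sum_multiscaleFlow hx, sum_comp_eq_add_sum_multiscaleFlow hy, h,
    add_sub_add_left_eq_sub, ← Finset.sum_sub_distrib]
  refine Finset.sum_le_sum fun R _ ↦ ?_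
  rw [add_sub_add_comm, ← sub_mul, ← sub_mul]
  exact add_le_add (mul_le_abs (hright R)) (mul_le_abs (hup R))

theorem gridCost_le_sum_abs_multiscaleFlow (h : Fintype.card ι = Fintype.card κ)
    (hx : ∀ i, x i ∈ dyadicGrid K) (hy : ∀ j, y j ∈ dyadicGrid K) :
    gridCost x y ≤ ∑ R ∈ dyadicGrid K,
      (|∑ i, multiscaleFlow 0 K R (x i) - ∑ j, multiscaleFlow 0 K R (y j)| +
        |∑ i, multiscaleFlow 1 K R.swap (x i).swap -
          ∑ j, multiscaleFlow 1 K R.swap (y j).swap|) := by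
  obtain ⟨f, hf, hcost⟩ := exists_potential_gridCost_le h x y
  have hstep {z w : ℕ × ℕ} (hzw : gridDist z w = 1) : |(f z : ℝ) - f w| ≤ 1 := by
    exact_mod_cast hzw ▸ hf z w
  exact hcost.trans (sum_sub_sum_le_sum_abs_multiscaleFlow (f := fun z ↦ f z) h hx hy
    (fun R ↦ hstep (by simp [gridDist])) (fun R ↦ hstep (by simp [gridDist])))

end Discrepancy

theorem gridCost_restrict_le_sum_abs_multiscaleFlow {ι κ : Type*} {K : ℕ} {x : ι → ℕ × ℕ}
    {y : κ → ℕ × ℕ} {u : Finset ι} {v : Finset κ} (huv : u.card = v.card)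
    (hx : ∀ i, x i ∈ dyadicGrid K) (hy : ∀ j, y j ∈ dyadicGrid K) :
    gridCost (fun i : u ↦ x i) (fun j : v ↦ y j) ≤ ∑ R ∈ dyadicGrid K,
      (|∑ i ∈ u, multiscaleFlow 0 K R (x i)| + |∑ j ∈ v, multiscaleFlow 0 K R (y j)| +
        (|∑ i ∈ u, multiscaleFlow 1 K R.swap (x i).swap| +
          |∑ j ∈ v, multiscaleFlow 1 K R.swap (y j).swap|)) := by
  have hcard : Fintype.card u = Fintype.card v := by simpa only [Fintype.card_coe] using huv
  refine (gridCost_le_sum_abs_multiscaleFlow hcard (fun i ↦ hx i) (fun j ↦ hy j)).trans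
    (Finset.sum_le_sum fun R _ ↦ add_le_add ?_ ?_)
  · rw [Finset.sum_coe_sort u fun i ↦ multiscaleFlow 0 K R (x i),
      Finset.sum_coe_sort v fun j ↦ multiscaleFlow 0 K R (y j)]
    exact abs_sub _ _
  · rw [Finset.sum_coe_sort u fun i ↦ multiscaleFlow 1 K R.swap (x i).swap,
      Finset.sum_coe_sort v fun j ↦ multiscaleFlow 1 K R.swap (y j).swap]
    exact abs_sub _ _

/-! ### Uniformly random grid points -/

open scoped BigOperators

section IndependentSamples

variable {ι G : Type*} [Fintype ι] [Fintype G] [DecidableEq ι]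

theorem expect_expect_update (i : ι) (h : (ι → G) → ℝ) :
    𝔼 x, 𝔼 z, h (Function.update x i z) = 𝔼 x, h x := by
  -- Exchanging the `i`-th coordinate with the fresh sample is an involution.
  let swapSample : (ι → G) × G → (ι → G) × G := fun p ↦ (Function.update p.1 i p.2, p.1 i)
  have hswap : Function.Involutive swapSample := by
    rintro ⟨x, z⟩
    simp [swapSample]
  calc 𝔼 x, 𝔼 z, h (Function.update x i z) = 𝔼 p, h (swapSample p).1 := by
        rw [← Finset.univ_product_univ, Finset.expect_product]
    _ = 𝔼 p : (ι → G) × G, h p.1 := Fintype.expect_equiv hswap.toPerm _ _ fun _ ↦ rfl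
    _ = 𝔼 x, 𝔼 _z : G, h x := by rw [← Finset.univ_product_univ, Finset.expect_product]
    _ = 𝔼 x, h x := Finset.expect_congr rfl fun x _ ↦ by
        have : Nonempty G := ⟨x i⟩
        exact Fintype.expect_const _

theorem expect_sq_sum_of_expect_eq_zero [Nonempty G] {ψ : G → ℝ} (hψ : 𝔼 z, ψ z = 0)
    (u : Finset ι) : 𝔼 x : ι → G, (∑ i ∈ u, ψ (x i)) ^ 2 = u.card * 𝔼 z, ψ z ^ 2 := by
  have hoffdiag (i j : ι) (hij : j ≠ i) : 𝔼 x : ι → G, ψ (x i) * ψ (x j) = 0 := by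
    rw [← expect_expect_update i]
    refine Finset.expect_eq_zero fun x _ ↦ ?_
    simp only [Function.update_self, Function.update_of_ne hij]
    rw [← Finset.expect_mul, hψ, zero_mul]
  have hdiag (i : ι) : 𝔼 x : ι → G, ψ (x i) * ψ (x i) = 𝔼 z, ψ z ^ 2 := by
    rw [← expect_expect_update i]
    simp only [Function.update_self, ← sq, Fintype.expect_const]
  simp only [sq, Finset.sum_mul_sum, Finset.expect_sum_comm] at hdiag ⊢
  rw [Finset.sum_congr rfl fun i hi ↦
    (Finset.sum_eq_single_of_mem i hi fun j _ hij ↦ hoffdiag i j hij).trans (hdiag i),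
    Finset.sum_const, nsmul_eq_mul]

theorem expect_abs_sum_le_of_expect_eq_zero [Nonempty G] {ψ : G → ℝ} (hψ : 𝔼 z, ψ z = 0)
    (u : Finset ι) : 𝔼 x : ι → G, |∑ i ∈ u, ψ (x i)| ≤ √(u.card * 𝔼 z, ψ z ^ 2) := by
  refine Real.le_sqrt_of_sq_le ?_
  rw [← expect_sq_sum_of_expect_eq_zero hψ]
  simpa using Finset.expect_mul_sq_le_sq_mul_sq Finset.univ
    (fun x : ι → G ↦ |∑ i ∈ u, ψ (x i)|) 1

end IndependentSamples

/-- The coordinates of a cell of an `N × N` grid as natural numbers. -/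
def gridPoint {N : ℕ} (s : Fin N × Fin N) : ℕ × ℕ :=
  (s.1, s.2)

section GridSamples

variable {ι κ : Type*} [Fintype ι] [Fintype κ] [DecidableEq ι] [DecidableEq κ] {K : ℕ}

theorem gridPoint_mem_dyadicGrid (s : Fin (2 ^ K) × Fin (2 ^ K)) :
    gridPoint s ∈ dyadicGrid K :=
  mem_dyadicGrid.2 ⟨s.1.isLt, s.2.isLt⟩

theorem expect_gridPoint (ψ : ℕ × ℕ → ℝ) :
    𝔼 s : Fin (2 ^ K) × Fin (2 ^ K), ψ (gridPoint s) =
      (∑ z ∈ dyadicGrid K, ψ z) / (2 ^ K) ^ 2 := by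
  rw [Fintype.expect_eq_sum_div_card, Fintype.sum_prod_type, dyadicGrid, Finset.sum_product]
  simp only [Finset.sum_range, gridPoint, Fintype.card_prod, Fintype.card_fin, sq]
  norm_num

theorem expect_abs_sum_gridPoint_le {ψ : ℕ × ℕ → ℝ} {V : ℝ}
    (hmean : ∑ z ∈ dyadicGrid K, ψ z = 0) (hV : ∑ z ∈ dyadicGrid K, ψ z ^ 2 ≤ V)
    (u : Finset ι) :
    𝔼 x : ι → Fin (2 ^ K) × Fin (2 ^ K), |∑ i ∈ u, ψ (gridPoint (x i))| ≤
      √(u.card * V) / 2 ^ K := by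
  calc _ ≤ √(u.card * 𝔼 s : Fin (2 ^ K) × Fin (2 ^ K), ψ (gridPoint s) ^ 2) :=
        expect_abs_sum_le_of_expect_eq_zero (by rw [expect_gridPoint, hmean, zero_div]) u
    _ = √(u.card * ∑ z ∈ dyadicGrid K, ψ z ^ 2) / 2 ^ K := by
        rw [expect_gridPoint fun z ↦ ψ z ^ 2, mul_div_assoc', Real.sqrt_div', Real.sqrt_sq] <;>
          positivity
    _ ≤ √(u.card * V) / 2 ^ K := by gcongr

theorem sum_dyadicGrid_swap (ψ : ℕ × ℕ → ℝ) :
    ∑ z ∈ dyadicGrid K, ψ z.swap = ∑ z ∈ dyadicGrid K, ψ z :=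
  Finset.sum_equiv (Equiv.prodComm ℕ ℕ)
    (fun _ ↦ ⟨swap_mem_dyadicGrid, fun h ↦ swap_mem_dyadicGrid h⟩) fun _ _ ↦ rfl

theorem expect_abs_sum_multiscaleFlow_le {l : ℕ} (hl : l ≤ 1) {R : ℕ × ℕ}
    (hR : R ∈ dyadicGrid K) (u : Finset ι) :
    𝔼 x : ι → Fin (2 ^ K) × Fin (2 ^ K), |∑ i ∈ u, multiscaleFlow l K R (gridPoint (x i))| ≤
      √(u.card * (16 * K)) / 2 ^ K :=
  expect_abs_sum_gridPoint_le (sum_multiscaleFlow l hR) (sum_sq_multiscaleFlow_le hl K _ R) u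

theorem expect_abs_sum_multiscaleFlow_swap_le {l : ℕ} (hl : l ≤ 1) {R : ℕ × ℕ}
    (hR : R ∈ dyadicGrid K) (u : Finset ι) :
    𝔼 x : ι → Fin (2 ^ K) × Fin (2 ^ K),
        |∑ i ∈ u, multiscaleFlow l K R.swap (gridPoint (x i)).swap| ≤
      √(u.card * (16 * K)) / 2 ^ K :=
  expect_abs_sum_gridPoint_le (ψ := fun z ↦ multiscaleFlow l K R.swap z.swap)
    ((sum_dyadicGrid_swap _).trans (sum_multiscaleFlow l (swap_mem_dyadicGrid hR)))
    ((sum_dyadicGrid_swap fun z ↦ multiscaleFlow l K R.swap z ^ 2).trans_le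
      (sum_sq_multiscaleFlow_le hl K _ _)) u

theorem expect_gridCost_le {u : Finset ι} {v : Finset κ} (huv : u.card = v.card) :
    𝔼 x : ι → Fin (2 ^ K) × Fin (2 ^ K), 𝔼 y : κ → Fin (2 ^ K) × Fin (2 ^ K),
        gridCost (fun i : u ↦ gridPoint (x i)) (fun j : v ↦ gridPoint (y j)) ≤
      16 * 2 ^ K * √(u.card * K) := by
  have hsqrt : √(u.card * (16 * K)) = 4 * √(u.card * K) := by
    rw [mul_left_comm, Real.sqrt_mul (by norm_num), show (16 : ℝ) = 4 ^ 2 by norm_num,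
      Real.sqrt_sq (by norm_num)]
  calc _ ≤ 𝔼 x : ι → Fin (2 ^ K) × Fin (2 ^ K), 𝔼 y : κ → Fin (2 ^ K) × Fin (2 ^ K),
        ∑ R ∈ dyadicGrid K,
          (|∑ i ∈ u, multiscaleFlow 0 K R (gridPoint (x i))| +
            |∑ j ∈ v, multiscaleFlow 0 K R (gridPoint (y j))| +
            (|∑ i ∈ u, multiscaleFlow 1 K R.swap (gridPoint (x i)).swap| +
            |∑ j ∈ v, multiscaleFlow 1 K R.swap (gridPoint (y j)).swap|)) :=
        Finset.expect_le_expect fun x _ ↦ Finset.expect_le_expect fun y _ ↦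
          gridCost_restrict_le_sum_abs_multiscaleFlow huv (fun _ ↦ gridPoint_mem_dyadicGrid _)
            fun _ ↦ gridPoint_mem_dyadicGrid _
    _ ≤ ∑ _R ∈ dyadicGrid K, 4 * (4 * √(u.card * K) / 2 ^ K) := by
        simp only [Finset.expect_sum_comm, Finset.expect_add_distrib, Fintype.expect_const]
        refine Finset.sum_le_sum fun R hR ↦ ?_
        have hx₀ := expect_abs_sum_multiscaleFlow_le zero_le_one hR u
        have hy₀ := expect_abs_sum_multiscaleFlow_le zero_le_one hR v
        have hx₁ := expect_abs_sum_multiscaleFlow_swap_le le_rfl hR u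
        have hy₁ := expect_abs_sum_multiscaleFlow_swap_le le_rfl hR v
        rw [← huv] at hy₀ hy₁
        rw [hsqrt] at hx₀ hy₀ hx₁ hy₁
        linarith
    _ = 16 * 2 ^ K * √(u.card * K) := by
        rw [Finset.sum_const, dyadicGrid, Finset.card_product, Finset.card_range, nsmul_eq_mul]
        push_cast
        field_simp
        ring

end GridSamples

/-! ### Local matchings -/

section LocalMatching

variable {n : ℕ} {x y : Fin n → EuclideanSpace ℝ (Fin 2)} {A B : Set (Fin n)}

theorem minLocalCost_nonneg : 0 ≤ minLocalCost x y A B :=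
  Real.sInf_nonneg fun _ ⟨_, _, hv⟩ ↦ hv ▸ Finset.sum_nonneg fun _ _ ↦ norm_nonneg _

theorem minLocalCost_le_sum {M : Finset (Fin n × Fin n)} (hM : IsMaxLocalMatching A B M) :
    minLocalCost x y A B ≤ ∑ p ∈ M, ‖x p.1 - y p.2‖ :=
  csInf_le ⟨0, fun _ ⟨_, _, hv⟩ ↦ hv ▸ Finset.sum_nonneg fun _ _ ↦ norm_nonneg _⟩ ⟨M, hM, rfl⟩

variable {u v : Finset (Fin n)}

theorem minLocalCost_le_sum_equiv (hu : ∀ i ∈ u, i ∈ A) (hv : ∀ j ∈ v, j ∈ B)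
    (hcard : u.card = min (Nat.card A) (Nat.card B)) (σ : u ≃ v) :
    minLocalCost x y A B ≤ ∑ i : u, ‖x i - y (σ i)‖ := by
  let pair : u ↪ Fin n × Fin n :=
    ⟨fun i ↦ (i, σ i), fun _ _ h ↦ Subtype.ext (congrArg Prod.fst h)⟩
  have hM : IsMaxLocalMatching A B (Finset.univ.map pair) := by
    simp only [IsMaxLocalMatching, Finset.forall_mem_map, Finset.mem_univ, forall_const,
      Finset.card_map, Finset.card_univ, Fintype.card_coe, hcard, and_true]
    refine ⟨fun i ↦ ⟨hu i i.2, hv _ (σ i).2⟩, fun i j hij ↦ ?_, fun i j hij ↦ ?_⟩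
    · rw [Subtype.ext hij]
    · rw [σ.injective (Subtype.ext hij)]
  exact (minLocalCost_le_sum hM).trans_eq (Finset.sum_map _ _ _)

theorem minLocalCost_le_gridCost (hu : ∀ i ∈ u, i ∈ A) (hv : ∀ j ∈ v, j ∈ B)
    (hcard : u.card = min (Nat.card A) (Nat.card B)) (huv : u.card = v.card)
    {X Y : Fin n → ℕ × ℕ} {N : ℝ}
    (hXY : ∀ i ∈ u, ∀ j ∈ v, ‖x i - y j‖ ≤ (gridDist (X i) (Y j) + 2) / N) :
    minLocalCost x y A B ≤
      (gridCost (fun i : u ↦ X i) (fun j : v ↦ Y j) + 2 * u.card) / N := by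
  have : Nonempty (u ≃ v) := ⟨Finset.equivOfCardEq huv⟩
  obtain ⟨σ, hσ⟩ := exists_eq_ciInf_of_finite
    (f := fun σ : u ≃ v ↦ ∑ i : u, (gridDist (X i) (Y (σ i)) : ℝ))
  calc minLocalCost x y A B ≤ ∑ i : u, ‖x i - y (σ i)‖ :=
        minLocalCost_le_sum_equiv hu hv hcard σ
    _ ≤ ∑ i : u, ((gridDist (X i) (Y (σ i)) : ℝ) + 2) / N :=
        Finset.sum_le_sum fun i _ ↦ hXY i i.2 _ (σ i).2
    _ = (gridCost (fun i : u ↦ X i) (fun j : v ↦ Y j) + 2 * u.card) / N := by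
        rw [gridCost, ← hσ, ← Finset.sum_div, Finset.sum_add_distrib, Finset.sum_const,
          Finset.card_univ, Fintype.card_coe, nsmul_eq_mul, mul_comm (u.card : ℝ)]

end LocalMatching

section MatchedIndices

variable {ι κ Q : Type*} [Fintype ι] [Fintype κ] [DecidableEq Q]

/-- A choice, among the indices `i` with `l i = q`, of as many as are matched in a maximal
matching between the fibres of `l` and `l'` over `q`. Selecting them from the labels alone keeps
them independent of the positions of the points inside the square `q`. -/
noncomputable def matchedIndices (l : ι → Q) (l' : κ → Q) (q : Q) : Finset ι :=
  (Finset.exists_subset_card_eq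
    (min_le_left (Finset.univ.filter (l · = q)).card (Finset.univ.filter (l' · = q)).card)).choose

variable (l : ι → Q) (l' : κ → Q)

theorem matchedIndices_subset (q : Q) :
    matchedIndices l l' q ⊆ Finset.univ.filter (l · = q) :=
  (Finset.exists_subset_card_eq (min_le_left _ _)).choose_spec.1

variable {l l'} in
theorem apply_of_mem_matchedIndices {q : Q} {i : ι} (hi : i ∈ matchedIndices l l' q) :
    l i = q :=
  (Finset.mem_filter.1 (matchedIndices_subset l l' q hi)).2

theorem card_matchedIndices (q : Q) :
    (matchedIndices l l' q).card = min (Nat.card {i | l i = q}) (Nat.card {j | l' j = q}) := by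
  have hcard : (matchedIndices l l' q).card =
      min (Finset.univ.filter (l · = q)).card (Finset.univ.filter (l' · = q)).card :=
    (Finset.exists_subset_card_eq (min_le_left _ _)).choose_spec.2
  simpa [Fintype.card_subtype] using hcard

theorem card_matchedIndices_comm (q : Q) :
    (matchedIndices l l' q).card = (matchedIndices l' l q).card := by
  rw [card_matchedIndices, card_matchedIndices, min_comm]

theorem sum_card_matchedIndices_le [Fintype Q] :
    ∑ q, (matchedIndices l l' q).card ≤ Fintype.card ι := by
  classical
  rw [← Finset.card_biUnion fun q _ q' _ hqq' ↦ Finset.disjoint_left.2 fun i hi hi' ↦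
    hqq' ((apply_of_mem_matchedIndices hi).symm.trans (apply_of_mem_matchedIndices hi'))]
  exact Finset.card_le_univ _

end MatchedIndices

/-! ### Uniform laws on finite types -/

section UniformLaw

variable {Ω Ω' G H : Type*} [MeasurableSpace Ω] [MeasurableSpace Ω'] {μ : Measure Ω}
  {ν : Measure Ω'} [Fintype G] [MeasurableSpace G] [Fintype H] [MeasurableSpace H]

/-- The random variable `c` is uniformly distributed on the finite type `G`. -/
structure HasUniformLaw (c : Ω → G) (μ : Measure Ω) : Prop where
  measurable : Measurable c
  measure_preimage_singleton (g : G) : μ (c ⁻¹' {g}) = (Fintype.card G : ENNReal)⁻¹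

variable {c : Ω → G} {d : Ω' → H}

theorem HasUniformLaw.prodMap [SFinite ν] (hc : HasUniformLaw c μ) (hd : HasUniformLaw d ν) :
    HasUniformLaw (Prod.map c d) (μ.prod ν) where
  measurable := hc.measurable.prodMap hd.measurable
  measure_preimage_singleton g := by
    rw [← Prod.mk.eta (p := g), ← Set.singleton_prod_singleton, Set.preimage_prod_map_prod,
      Measure.prod_prod, hc.measure_preimage_singleton, hd.measure_preimage_singleton,
      Fintype.card_prod, Nat.cast_mul, ENNReal.mul_inv (by simp) (by simp)]

theorem HasUniformLaw.pi {ι : Type*} [Fintype ι] [DecidableEq ι] [SigmaFinite μ]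
    (hc : HasUniformLaw c μ) :
    HasUniformLaw (fun (x : ι → Ω) i ↦ c (x i)) (Measure.pi fun _ ↦ μ) where
  measurable := measurable_pi_lambda _ fun i ↦ hc.measurable.comp (measurable_pi_apply i)
  measure_preimage_singleton g := by
    have hpre : (fun (x : ι → Ω) i ↦ c (x i)) ⁻¹' {g} = Set.univ.pi fun i ↦ c ⁻¹' {g i} := by
      ext x
      simp [funext_iff]
    rw [hpre, Measure.pi_pi]
    simp only [hc.measure_preimage_singleton, Finset.prod_const, Finset.card_univ,
      Fintype.card_fun, Nat.cast_pow, ENNReal.inv_pow]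

theorem HasUniformLaw.comp_measurePreserving {f : Ω' → Ω} (hc : HasUniformLaw c μ)
    (hf : MeasurePreserving f ν μ) [MeasurableSingletonClass G] : HasUniformLaw (c ∘ f) ν where
  measurable := hc.measurable.comp hf.measurable
  measure_preimage_singleton g := by
    rw [Set.preimage_comp, hf.measure_preimage
      (hc.measurable (measurableSet_singleton g)).nullMeasurableSet, hc.measure_preimage_singleton]

theorem HasUniformLaw.equiv_comp [DiscreteMeasurableSpace G] (hc : HasUniformLaw c μ)
    (e : G ≃ H) : HasUniformLaw (e ∘ c) μ where
  measurable := (Measurable.of_discrete (f := e)).comp hc.measurable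
  measure_preimage_singleton h := by
    rw [Set.preimage_comp, ← e.image_symm_eq_preimage, Set.image_singleton,
      hc.measure_preimage_singleton, Fintype.card_congr e]

variable [MeasurableSingletonClass G]

theorem HasUniformLaw.integrable_comp [IsFiniteMeasure μ] (hc : HasUniformLaw c μ) (F : G → ℝ) :
    Integrable (fun ω ↦ F (c ω)) μ :=
  (Integrable.of_finite (μ := μ.map c)).comp_measurable hc.measurable

theorem HasUniformLaw.integral_comp [IsFiniteMeasure μ] (hc : HasUniformLaw c μ) (F : G → ℝ) :
    ∫ ω, F (c ω) ∂μ = 𝔼 g, F g := by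
  have hF : Integrable F (μ.map c) := Integrable.of_finite
  rw [← integral_map hc.measurable.aemeasurable hF.aestronglyMeasurable, integral_fintype hF]
  simp only [measureReal_def, Measure.map_apply hc.measurable (measurableSet_singleton _),
    hc.measure_preimage_singleton, ENNReal.toReal_inv, ENNReal.toReal_natCast, smul_eq_mul]
  rw [← Finset.mul_sum, Fintype.expect_eq_sum_div_card, inv_mul_eq_div]

end UniformLaw

/-! ### Cells of a point of the unit square -/

section SubIndex

variable {b M : ℕ} [NeZero b] [NeZero M] {s t : ℝ}

/-- The position of `t ∈ [0, 1)` in the partition of `[0, 1)` into `b` intervals, each cut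
further into `M` intervals: the index of the coarse interval containing `t`, and the index of the
fine one inside it. Reducing modulo `b` and `M` (by `Fin.ofNat`) only matters for the first index
outside `[0, 1)`. -/
noncomputable def subIndex (b M : ℕ) [NeZero b] [NeZero M] (t : ℝ) : Fin b × Fin M :=
  (Fin.ofNat b (⌊t * (b * M)⌋₊ / M), Fin.ofNat M ⌊t * (b * M)⌋₊)

theorem measurable_subIndex : Measurable (subIndex b M) :=
  (measurable_from_top (f := fun k : ℕ ↦ (Fin.ofNat b (k / M), Fin.ofNat M k))).comp
    (Nat.measurable_floor.comp (measurable_id.mul_const _))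

theorem floor_eq_subIndex (ht : t ∈ Set.Ico (0 : ℝ) 1) :
    ⌊t * (b * M)⌋₊ = (subIndex b M t).1 * M + (subIndex b M t).2 := by
  have hfloor : ⌊t * (b * M)⌋₊ < b * M := by
    rw [Nat.floor_lt (by have := ht.1; positivity)]
    push_cast
    exact mul_lt_of_lt_one_left (by have := NeZero.pos b; have := NeZero.pos M; positivity) ht.2
  simp only [subIndex, Fin.val_ofNat,
    Nat.mod_eq_of_lt (Nat.div_lt_of_lt_mul (mul_comm b M ▸ hfloor))]
  exact (Nat.div_add_mod' _ _).symm

theorem subIndex_eq_iff (ht : t ∈ Set.Ico (0 : ℝ) 1) {i : Fin b} {j : Fin M} :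
    subIndex b M t = (i, j) ↔ ⌊t * (b * M)⌋₊ = i * M + j := by
  refine ⟨fun h ↦ by rw [floor_eq_subIndex ht, h], fun h ↦ ?_⟩
  rw [floor_eq_subIndex ht] at h
  have hM := NeZero.pos M
  have hdiv := congrArg (· / M) h
  have hmod := congrArg (· % M) h
  simp only [mul_comm _ M, Nat.mul_add_div hM, Nat.div_eq_of_lt (Fin.isLt _), add_zero,
    Nat.mul_add_mod, Nat.mod_eq_of_lt (Fin.isLt _)] at hdiv hmod
  exact Prod.ext (Fin.ext hdiv) (Fin.ext hmod)

theorem subIndex_fst_eq_iff (ht : t ∈ Set.Ico (0 : ℝ) 1) {i : Fin b} :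
    (subIndex b M t).1 = i ↔ t ∈ Set.Ico ((i : ℝ) / b) ((i + 1) / b) := by
  have hb : (0 : ℝ) < b := Nat.cast_pos.2 (NeZero.pos b)
  have hM := NeZero.pos M
  have hfst : ((subIndex b M t).1 : ℕ) = ⌊t * b⌋₊ := by
    have hdiv := congrArg (· / M) (floor_eq_subIndex (b := b) (M := M) ht)
    simp only [mul_comm _ M, Nat.mul_add_div hM, Nat.div_eq_of_lt (Fin.isLt _), add_zero] at hdiv
    rw [← hdiv, ← Nat.floor_div_natCast]
    congr 1
    field_simp
  rw [Fin.ext_iff, hfst, Nat.floor_eq_iff (mul_nonneg ht.1 hb.le), Set.mem_Ico, div_le_iff₀ hb,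
    lt_div_iff₀ hb]

theorem abs_sub_le_of_subIndex_fst_eq (hs : s ∈ Set.Ico (0 : ℝ) 1) (ht : t ∈ Set.Ico (0 : ℝ) 1)
    (hst : (subIndex b M s).1 = (subIndex b M t).1) :
    |s - t| ≤ (|((subIndex b M s).2 : ℝ) - (subIndex b M t).2| + 1) / (b * M) := by
  have hN : (0 : ℝ) < b * M := by
    have := NeZero.pos b
    have := NeZero.pos M
    positivity
  have hfloor : (⌊s * (b * M)⌋₊ : ℝ) - ⌊t * (b * M)⌋₊ =
      (subIndex b M s).2 - (subIndex b M t).2 := by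
    rw [floor_eq_subIndex hs, floor_eq_subIndex ht, hst]
    push_cast
    ring
  rw [le_div_iff₀ hN, ← abs_of_pos hN, ← abs_mul, sub_mul, ← hfloor, abs_le]
  have hs₀ := Nat.floor_le (mul_nonneg hs.1 hN.le)
  have hs₁ := Nat.lt_floor_add_one (s * (b * M))
  have ht₀ := Nat.floor_le (mul_nonneg ht.1 hN.le)
  have ht₁ := Nat.lt_floor_add_one (t * (b * M))
  constructor <;> cases abs_cases ((⌊s * (b * M)⌋₊ : ℝ) - ⌊t * (b * M)⌋₊) <;> linarith

theorem preimage_subIndex_inter_Ico (i : Fin b) (j : Fin M) :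
    subIndex b M ⁻¹' {(i, j)} ∩ Set.Ico 0 1 =
      Set.Ico ((i * M + j : ℕ) / (b * M) : ℝ) (((i * M + j : ℕ) + 1) / (b * M)) := by
  have hN : 0 < b * M := mul_pos (NeZero.pos b) (NeZero.pos M)
  have hN' : (0 : ℝ) < b * M := by exact_mod_cast hN
  have hk : (i : ℕ) * M + j + 1 ≤ b * M := by nlinarith [i.isLt, j.isLt]
  have hk' : ((i * M + j : ℕ) : ℝ) + 1 ≤ b * M := by exact_mod_cast hk
  ext t
  have hmem : t ∈ Set.Ico ((i * M + j : ℕ) / (b * M) : ℝ) (((i * M + j : ℕ) + 1) / (b * M)) ↔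
      ((i * M + j : ℕ) : ℝ) ≤ t * (b * M) ∧ t * (b * M) < (i * M + j : ℕ) + 1 := by
    rw [Set.mem_Ico, div_le_iff₀ hN', lt_div_iff₀ hN']
  rw [hmem]
  refine ⟨fun ⟨h, ht⟩ ↦ ?_, fun h ↦ ?_⟩
  · rwa [Set.mem_preimage, Set.mem_singleton_iff, subIndex_eq_iff ht,
      Nat.floor_eq_iff (mul_nonneg ht.1 hN'.le)] at h
  · have ht : t ∈ Set.Ico (0 : ℝ) 1 :=
      ⟨nonneg_of_mul_nonneg_left ((Nat.cast_nonneg _).trans h.1) hN',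
        (mul_lt_iff_lt_one_left hN').1 (h.2.trans_le hk')⟩
    exact ⟨(subIndex_eq_iff ht).2 ((Nat.floor_eq_iff (mul_nonneg ht.1 hN'.le)).2 h), ht⟩

theorem hasUniformLaw_subIndex :
    HasUniformLaw (subIndex b M) (volume.restrict (Set.Ico (0 : ℝ) 1)) where
  measurable := measurable_subIndex
  measure_preimage_singleton := fun ⟨i, j⟩ ↦ by
    have hN : (0 : ℝ) < (b * M : ℕ) :=
      Nat.cast_pos.2 (mul_pos (NeZero.pos b) (NeZero.pos M))
    rw [Measure.restrict_apply (measurable_subIndex (measurableSet_singleton _)),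
      preimage_subIndex_inter_Ico, Real.volume_Ico, ← sub_div, add_sub_cancel_left, one_div,
      ← Nat.cast_mul, ENNReal.ofReal_inv_of_pos hN, ENNReal.ofReal_natCast, Fintype.card_prod,
      Fintype.card_fin, Fintype.card_fin]

end SubIndex

section UnitSquare

theorem measurePreserving_coords :
    MeasurePreserving (fun p : EuclideanSpace ℝ (Fin 2) ↦ (p 0, p 1)) unifSquare
      ((volume.restrict (Set.Ico 0 1)).prod (volume.restrict (Set.Ico 0 1))) := by
  have hcoords := (volume_preserving_finTwoArrow ℝ).comp
    (EuclideanSpace.volume_preserving_symm_measurableEquiv_toLp (Fin 2))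
  have hsquare : unitSquare =
      (fun p : EuclideanSpace ℝ (Fin 2) ↦ (p 0, p 1)) ⁻¹' Set.Icc 0 1 ×ˢ Set.Icc 0 1 := by
    ext p
    exact Fin.forall_fin_two
  rw [Measure.restrict_congr_set Ico_ae_eq_Icc, Measure.prod_restrict, unifSquare, hsquare]
  exact hcoords.restrict_preimage (measurableSet_Icc.prod measurableSet_Icc)

instance isProbabilityMeasure_unifSquare : IsProbabilityMeasure unifSquare where
  measure_univ := by
    rw [← Set.preimage_univ, measurePreserving_coords.measure_preimage nullMeasurableSet_univ,
      ← Set.univ_prod_univ, Measure.prod_prod]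
    simp

theorem ae_unifSquare_mem_Ico :
    ∀ᵐ p ∂unifSquare, p 0 ∈ Set.Ico (0 : ℝ) 1 ∧ p 1 ∈ Set.Ico (0 : ℝ) 1 := by
  refine measurePreserving_coords.quasiMeasurePreserving.ae
    (p := fun z ↦ z ∈ Set.Ico (0 : ℝ) 1 ×ˢ Set.Ico (0 : ℝ) 1) ?_
  rw [Measure.prod_restrict]
  exact ae_restrict_mem (measurableSet_Ico.prod measurableSet_Ico)

variable {b M : ℕ} [NeZero b] [NeZero M] {p q : EuclideanSpace ℝ (Fin 2)}

/-- The pair consisting of the index of the square `gridSquare b` containing `p`, and of the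
position of `p` in the subdivision of this square into `M × M` cells. -/
noncomputable def subCell (b M : ℕ) [NeZero b] [NeZero M] (p : EuclideanSpace ℝ (Fin 2)) :
    (Fin b × Fin b) × (Fin M × Fin M) :=
  Equiv.prodProdProdComm _ _ _ _ (subIndex b M (p 0), subIndex b M (p 1))

theorem hasUniformLaw_subCell : HasUniformLaw (subCell b M) unifSquare :=
  ((hasUniformLaw_subIndex.prodMap hasUniformLaw_subIndex).comp_measurePreserving
    measurePreserving_coords).equiv_comp (Equiv.prodProdProdComm _ _ _ _)

theorem mem_gridSquare_iff_subCell (hp : p 0 ∈ Set.Ico (0 : ℝ) 1 ∧ p 1 ∈ Set.Ico (0 : ℝ) 1)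
    (g : Fin b × Fin b) : p ∈ gridSquare b g ↔ (subCell b M p).1 = g :=
  ((Prod.ext_iff (x := (subCell b M p).1)).trans
    ((subIndex_fst_eq_iff hp.1).and (subIndex_fst_eq_iff hp.2))).symm

theorem norm_le_abs_add_abs (v : EuclideanSpace ℝ (Fin 2)) : ‖v‖ ≤ |v 0| + |v 1| := by
  rw [EuclideanSpace.norm_eq, Fin.sum_univ_two, Real.sqrt_le_left (by positivity)]
  simp only [Real.norm_eq_abs]
  nlinarith [abs_nonneg (v 0), abs_nonneg (v 1)]

theorem norm_sub_le_of_subCell_fst_eq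
    (hp : p 0 ∈ Set.Ico (0 : ℝ) 1 ∧ p 1 ∈ Set.Ico (0 : ℝ) 1)
    (hq : q 0 ∈ Set.Ico (0 : ℝ) 1 ∧ q 1 ∈ Set.Ico (0 : ℝ) 1)
    (hpq : (subCell b M p).1 = (subCell b M q).1) :
    ‖p - q‖ ≤
      (gridDist (gridPoint (subCell b M p).2) (gridPoint (subCell b M q).2) + 2) / (b * M) := by
  obtain ⟨hpq₀, hpq₁⟩ := Prod.ext_iff.1 hpq
  refine (norm_le_abs_add_abs (p - q)).trans ((add_le_add
    (abs_sub_le_of_subIndex_fst_eq hp.1 hq.1 hpq₀)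
    (abs_sub_le_of_subIndex_fst_eq hp.2 hq.2 hpq₁)).trans_eq ?_)
  simp only [gridDist, gridPoint, subCell, Equiv.prodProdProdComm_apply]
  push_cast
  ring

end UnitSquare

/-! ### The expected cost of local matchings -/

theorem sum_sqrt_le_sqrt_card_mul_sum {ι : Type*} (s : Finset ι) {a : ι → ℝ} (ha : ∀ i, 0 ≤ a i) :
    ∑ i ∈ s, √(a i) ≤ √(s.card * ∑ i ∈ s, a i) := by
  simpa [Real.sqrt_mul] using
    Real.sum_sqrt_mul_sqrt_le s (f := fun _ ↦ 1) (g := a) (fun _ ↦ zero_le_one) ha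

theorem expect_le_of_forall_expect_le {ι Q S : Type*} [Fintype ι] [DecidableEq ι] [Fintype Q]
    [Fintype S] [Nonempty Q] {F : (ι → Q × S) → ℝ} {C : ℝ}
    (hF : ∀ l : ι → Q, 𝔼 s : ι → S, F (fun i ↦ (l i, s i)) ≤ C) : 𝔼 x, F x ≤ C := by
  rw [Fintype.expect_equiv (Equiv.arrowProdEquivProdArrow ι (fun _ ↦ Q) fun _ ↦ S) F
    (fun p ↦ F fun i ↦ (p.1 i, p.2 i)) fun _ ↦ rfl, ← Finset.univ_product_univ,
    Finset.expect_product]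
  exact Finset.expect_le Finset.univ_nonempty fun l _ ↦ hF l

section LocalGridCost

variable {ι κ Q : Type*} [Fintype ι] [Fintype κ] [Fintype Q] [DecidableEq Q] {N : ℕ}

/-- The total cost, in the `ℓ¹` distance of local cells, of optimally matching within every
square the points selected by `matchedIndices`; `X i` consists of the square of the `i`-th point
and of its cell in this square. -/
noncomputable def localGridCost (X : ι → Q × (Fin N × Fin N)) (Y : κ → Q × (Fin N × Fin N)) : ℝ :=
  ∑ q, gridCost (fun i : matchedIndices (Prod.fst ∘ X) (Prod.fst ∘ Y) q ↦ gridPoint (X i).2)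
    (fun j : matchedIndices (Prod.fst ∘ Y) (Prod.fst ∘ X) q ↦ gridPoint (Y j).2)

theorem expect_localGridCost_le [Nonempty Q] [DecidableEq ι] [DecidableEq κ] (K : ℕ) :
    𝔼 X : ι → Q × (Fin (2 ^ K) × Fin (2 ^ K)), 𝔼 Y : κ → Q × (Fin (2 ^ K) × Fin (2 ^ K)),
      localGridCost X Y ≤ 16 * 2 ^ K * √(Fintype.card Q * (Fintype.card ι * K)) := by
  refine expect_le_of_forall_expect_le fun l ↦ ?_
  rw [Finset.expect_comm]
  refine expect_le_of_forall_expect_le fun l' ↦ ?_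
  rw [Finset.expect_comm]
  have hcard : (∑ q, (matchedIndices l l' q).card : ℝ) ≤ Fintype.card ι := by
    exact_mod_cast sum_card_matchedIndices_le l l'
  calc _ = ∑ q, 𝔼 s : ι → Fin (2 ^ K) × Fin (2 ^ K), 𝔼 t : κ → Fin (2 ^ K) × Fin (2 ^ K),
        gridCost (fun i : matchedIndices l l' q ↦ gridPoint (s i))
          (fun j : matchedIndices l' l q ↦ gridPoint (t j)) := by
        simp only [← Finset.expect_sum_comm]
        rfl
    _ ≤ ∑ q, 16 * 2 ^ K * √((matchedIndices l l' q).card * K) :=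
        Finset.sum_le_sum fun q _ ↦ expect_gridCost_le (card_matchedIndices_comm l l' q)
    _ ≤ 16 * 2 ^ K * √(Fintype.card Q * ∑ q, ((matchedIndices l l' q).card * K : ℝ)) := by
        rw [← Finset.mul_sum]
        gcongr
        exact sum_sqrt_le_sqrt_card_mul_sum Finset.univ fun q ↦
          mul_nonneg (Nat.cast_nonneg _) (Nat.cast_nonneg K)
    _ ≤ 16 * 2 ^ K * √(Fintype.card Q * (Fintype.card ι * K)) := by
        rw [← Finset.sum_mul]
        gcongr

end LocalGridCost

section Expectation

variable {n b M : ℕ} [NeZero b] [NeZero M] {x y : Fin n → EuclideanSpace ℝ (Fin 2)}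

theorem sum_minLocalCost_le_localGridCost
    (hx : ∀ i, x i 0 ∈ Set.Ico (0 : ℝ) 1 ∧ x i 1 ∈ Set.Ico (0 : ℝ) 1)
    (hy : ∀ i, y i 0 ∈ Set.Ico (0 : ℝ) 1 ∧ y i 1 ∈ Set.Ico (0 : ℝ) 1) :
    ∑ g, minLocalCost x y {i | x i ∈ gridSquare b g} {i | y i ∈ gridSquare b g} ≤
      (localGridCost (fun i ↦ subCell b M (x i)) (fun i ↦ subCell b M (y i)) + 2 * n) /
        (b * M) := by
  let l : Fin n → Fin b × Fin b := fun i ↦ (subCell b M (x i)).1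
  let l' : Fin n → Fin b × Fin b := fun i ↦ (subCell b M (y i)).1
  have hsquare (g : Fin b × Fin b) :
      minLocalCost x y {i | x i ∈ gridSquare b g} {i | y i ∈ gridSquare b g} ≤
        (gridCost (fun i : matchedIndices l l' g ↦ gridPoint (subCell b M (x i)).2)
          (fun i : matchedIndices l' l g ↦ gridPoint (subCell b M (y i)).2) +
          2 * (matchedIndices l l' g).card) / (b * M) := by
    have hA : {i | x i ∈ gridSquare b g} = {i | l i = g} :=
      Set.ext fun i ↦ mem_gridSquare_iff_subCell (hx i) g
    have hB : {i | y i ∈ gridSquare b g} = {i | l' i = g} :=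
      Set.ext fun i ↦ mem_gridSquare_iff_subCell (hy i) g
    rw [hA, hB]
    refine minLocalCost_le_gridCost (X := fun i ↦ gridPoint (subCell b M (x i)).2)
      (Y := fun i ↦ gridPoint (subCell b M (y i)).2) (fun _ ↦ apply_of_mem_matchedIndices)
      (fun _ ↦ apply_of_mem_matchedIndices) (card_matchedIndices l l' g)
      (card_matchedIndices_comm l l' g) fun i hi j hj ↦ ?_
    exact norm_sub_le_of_subCell_fst_eq (hx i) (hy j)
      ((apply_of_mem_matchedIndices hi).trans (apply_of_mem_matchedIndices hj).symm)
  have hcard : (∑ g, (matchedIndices l l' g).card : ℝ) ≤ n := by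
    exact_mod_cast (sum_card_matchedIndices_le l l').trans_eq (Fintype.card_fin n)
  refine (Finset.sum_le_sum fun g _ ↦ hsquare g).trans ?_
  rw [← Finset.sum_div, Finset.sum_add_distrib, ← Finset.mul_sum]
  gcongr
  exact le_rfl

theorem ae_pi_unifSquare_mem_Ico :
    ∀ᵐ x ∂(Measure.pi fun _ : Fin n ↦ unifSquare),
      ∀ i, x i 0 ∈ Set.Ico (0 : ℝ) 1 ∧ x i 1 ∈ Set.Ico (0 : ℝ) 1 :=
  ae_all_iff.2 fun i ↦
    (Measure.quasiMeasurePreserving_eval (fun _ ↦ unifSquare) i).ae ae_unifSquare_mem_Ico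

theorem integral_sum_minLocalCost_le (K : ℕ) :
    ∫ ω : (Fin n → EuclideanSpace ℝ (Fin 2)) × (Fin n → EuclideanSpace ℝ (Fin 2)),
        ∑ g, minLocalCost ω.1 ω.2 {i | ω.1 i ∈ gridSquare b g} {i | ω.2 i ∈ gridSquare b g}
        ∂((Measure.pi fun _ ↦ unifSquare).prod (Measure.pi fun _ ↦ unifSquare)) ≤
      16 * √(n * K) + 2 * n / (b * 2 ^ K) := by
  have hlaw : HasUniformLaw (fun (x : Fin n → EuclideanSpace ℝ (Fin 2)) i ↦ subCell b (2 ^ K) (x i))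
      (Measure.pi fun _ ↦ unifSquare) := hasUniformLaw_subCell.pi
  let bound (X Y : Fin n → (Fin b × Fin b) × (Fin (2 ^ K) × Fin (2 ^ K))) : ℝ :=
    (localGridCost X Y + 2 * n) / (b * 2 ^ K)
  have hb : (0 : ℝ) < b := Nat.cast_pos.2 (NeZero.pos b)
  calc _ ≤ ∫ ω, bound (fun i ↦ subCell b (2 ^ K) (ω.1 i)) (fun i ↦ subCell b (2 ^ K) (ω.2 i))
          ∂((Measure.pi fun _ ↦ unifSquare).prod (Measure.pi fun _ ↦ unifSquare)) := by
        refine integral_mono_of_nonneg (.of_forall fun ω ↦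
          Finset.sum_nonneg fun g _ ↦ minLocalCost_nonneg)
          ((hlaw.prodMap hlaw).integrable_comp fun p ↦ bound p.1 p.2) ?_
        filter_upwards [Measure.quasiMeasurePreserving_fst.ae ae_pi_unifSquare_mem_Ico,
          Measure.quasiMeasurePreserving_snd.ae ae_pi_unifSquare_mem_Ico] with ω hx hy
        simpa using sum_minLocalCost_le_localGridCost (M := 2 ^ K) hx hy
    _ = 𝔼 X, 𝔼 Y, bound X Y := by
        rw [← Finset.expect_product Finset.univ Finset.univ fun p ↦ bound p.1 p.2,
          Finset.univ_product_univ]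
        exact (hlaw.prodMap hlaw).integral_comp fun p ↦ bound p.1 p.2
    _ = ((𝔼 X : Fin n → (Fin b × Fin b) × (Fin (2 ^ K) × Fin (2 ^ K)),
          𝔼 Y : Fin n → (Fin b × Fin b) × (Fin (2 ^ K) × Fin (2 ^ K)), localGridCost X Y) +
          2 * n) / (b * 2 ^ K) := by
        simp only [bound, ← Finset.expect_div, Finset.expect_add_distrib, Fintype.expect_const]
    _ ≤ (16 * 2 ^ K * √((b ^ 2 : ℝ) * (n * K)) + 2 * n) / (b * 2 ^ K) := by
        gcongr
        simpa [sq] using expect_localGridCost_le (ι := Fin n) (κ := Fin n) (Q := Fin b × Fin b) K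
    _ = 16 * √(n * K) + 2 * n / (b * 2 ^ K) := by
        rw [Real.sqrt_mul (by positivity), Real.sqrt_sq hb.le]
        field_simp

end Expectation

theorem clog_two_le_four_mul_log {n : ℕ} (hn : 2 ≤ n) : (Nat.clog 2 n : ℝ) ≤ 4 * Real.log n := by
  have hlog2 : 1 / 2 < Real.log 2 := by linarith [Real.log_two_gt_d9]
  have hlog : Real.log 2 ≤ Real.log n :=
    Real.log_le_log two_pos (Nat.ofNat_le_cast.2 hn)
  calc (Nat.clog 2 n : ℝ) = ⌈Real.logb 2 n⌉₊ := by
        exact_mod_cast (Real.natCeil_logb_natCast 2 n).symm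
    _ ≤ Real.logb 2 n + 1 :=
        (Nat.ceil_lt_add_one (Real.logb_nonneg one_lt_two (Nat.one_le_cast.2 (by lia)))).le
    _ ≤ 4 * Real.log n := by
        rw [Real.logb, div_add_one (by positivity), div_le_iff₀ (by positivity)]
        nlinarith

/-- there is a constant `C > 0` such that for all `n ≥ 2` and `b ≥ 1`
(with `m = b²`), for `2n` mutually independent uniform points `x₁,…,x_n, y₁,…,y_n` in the
unit square (modeled by the product measure on pairs of configurations `ω = (x, y)`),
partitioning the unit square into the `m` half-open congruent squares of side `1/b` and
letting `L = Σ_i L_i` be the total cost of minimum maximal local matchings within the squares,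
one has `E[L] ≤ C·sqrt(n·log n)`. -/
theorem stmt_18 :
    ∃ C : ℝ, 0 < C ∧ ∀ n : ℕ, 2 ≤ n → ∀ b : ℕ, 1 ≤ b →
      ∫ ω : (Fin n → EuclideanSpace ℝ (Fin 2)) × (Fin n → EuclideanSpace ℝ (Fin 2)),
          (∑ ij : Fin b × Fin b,
            minLocalCost ω.1 ω.2
              {j : Fin n | ω.1 j ∈ gridSquare b ij} {j : Fin n | ω.2 j ∈ gridSquare b ij})
          ∂((Measure.pi fun _ : Fin n => unifSquare).prod
              (Measure.pi fun _ : Fin n => unifSquare))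
        ≤ C * Real.sqrt ((n : ℝ) * Real.log n) := by
  refine ⟨34, by norm_num, fun n hn b hb ↦ ?_⟩
  have : NeZero b := ⟨by lia⟩
  have hn' : (2 : ℝ) ≤ n := Nat.ofNat_le_cast.2 hn
  have hlog : 1 / 2 ≤ Real.log n := by
    linarith [Real.log_two_gt_d9, Real.log_le_log two_pos hn']
  let K := Nat.clog 2 n
  have hmain : √(n * K) ≤ 2 * √(n * Real.log n) := by
    refine Real.sqrt_le_iff.2 ⟨by positivity, ?_⟩
    rw [mul_pow, Real.sq_sqrt (by positivity)]
    nlinarith [clog_two_le_four_mul_log hn]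
  have hround : 2 * n / (b * 2 ^ K) ≤ (2 : ℝ) := by
    refine div_le_of_le_mul₀ (by positivity) zero_le_two ?_
    exact_mod_cast Nat.mul_le_mul_left 2
      ((Nat.le_pow_clog one_lt_two n).trans (Nat.le_mul_of_pos_left _ hb))
  have hone : 1 ≤ √(n * Real.log n) := Real.one_le_sqrt.2 (by nlinarith)
  linarith [integral_sum_minLocalCost_le (n := n) (b := b) K]
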